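/- For all integers w, p0, p1, p2, k and all nonnegative integers u, ℓ, one has G(w,u,ℓ;p0,p1,p2) = q^{4ku} G(w+2k,u,ℓ;p0−2k,p1−k,p2−k). -/

import Mathlib

open Finset

noncomputable section

/-- The field `ℚ(q)` of rational functions over `ℚ`. -/
abbrev F : Type := RatFunc ℚ

/-- The indeterminate `q`. -/
noncomputable def qq : F := RatFunc.X

/-- The quantum integer `[n]` with base `v`: `(v^n - v^(-n))/(v - v⁻¹)`. -/
noncomputable def qint (v : F) (n : ℤ) : F := (v ^ n - v ^ (-n)) / (v - v⁻¹)

/-- The quantum factorial `[m]! = [1][2]⋯[m]` with base `v`. -/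
noncomputable def qfact (v : F) (m : ℕ) : F := ∏ k ∈ range m, qint v ((k : ℤ) + 1)

/-- The quantum binomial coefficient `C_v(n,d) = [n][n-1]⋯[n-d+1]/[d]!` for `d ≥ 0`,
and `0` for `d < 0`. -/
noncomputable def qbinom (v : F) (n d : ℤ) : F :=
  if d < 0 then 0
  else (∏ k ∈ range d.toNat, qint v (n - (k : ℤ))) / qfact v d.toNat

/-- The function `G(w,u,ℓ;p0,p1,p2)` of [CLW, (5.1)]. -/
noncomputable def G (w : ℤ) (u ℓ : ℕ) (p0 p1 p2 : ℤ) : F :=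
  (-1 : F) ^ w * qq ^ ((u : ℤ) ^ 2 - w * (u : ℤ) + (ℓ : ℤ) * (u : ℤ)) *
  ((∑ c ∈ range (u + 1), ∑ e ∈ range (u + 1 - c), ∑ t ∈ range (ℓ + 1),
      (let r : ℕ := u - c - e;
       if Even ((t : ℤ) + w - (r : ℤ)) then
         qq ^ (-(t : ℤ) * ((ℓ : ℤ) + (u : ℤ) - 1) - (u : ℤ) * ((c : ℤ) + (e : ℤ)) + 2 * (c : ℤ)
               + (r : ℤ) * p0 + 2 * (c : ℤ) * p1 + 2 * (e : ℤ) * p2)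
           * qbinom qq (ℓ : ℤ) (t : ℤ) * qbinom qq (w + (t : ℤ) + p0) (r : ℤ)
           * qbinom (qq ^ 2) ((w + (t : ℤ) - (r : ℤ)) / 2 + p1) (c : ℤ)
           * qbinom (qq ^ 2) ((w + (t : ℤ) - (r : ℤ)) / 2 + p2) (e : ℤ)
       else 0))
  - (∑ c ∈ range (u + 1), ∑ e ∈ range (u + 1 - c), ∑ t ∈ range (ℓ + 1),
      (let r : ℕ := u - c - e;
       if ¬ Even ((t : ℤ) + w - (r : ℤ)) then
         qq ^ (-(t : ℤ) * ((ℓ : ℤ) + (u : ℤ) - 1) - ((u : ℤ) - 1) * ((c : ℤ) + (e : ℤ))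
               + (r : ℤ) * p0 + 2 * (c : ℤ) * p1 + 2 * (e : ℤ) * p2)
           * qbinom qq (ℓ : ℤ) (t : ℤ) * qbinom qq (w + (t : ℤ) + p0) (r : ℤ)
           * qbinom (qq ^ 2) (1 + (w + (t : ℤ) - (r : ℤ) - 1) / 2 + p1) (c : ℤ)
           * qbinom (qq ^ 2) ((w + (t : ℤ) - (r : ℤ) - 1) / 2 + p2) (e : ℤ)
       else 0)))

/-!
Apart from powers of `q`, the formula for `G` involves `w`, `p0`, `p1`, `p2` only through `w + p0`,
the parity of `w`, and `⌊(w + j)/2⌋ + p1`, `⌊(w + j)/2⌋ + p2` for certain integers `j`, all of which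
are invariant under the shift. The power of `q` in front of the sums changes by `q^{2ku}`, and so
does each summand, whose exponent contains `r p0 + 2c p1 + 2e p2` with `c + e + r = u`.
-/

theorem qq_ne_zero : qq ≠ 0 := RatFunc.X_ne_zero

theorem even_add_two_mul_iff (k x : ℤ) : Even (x + 2 * k) ↔ Even x := by
  rw [Int.even_add, iff_true_right (even_two_mul k)]

theorem add_two_mul_ediv_two (k x : ℤ) : (x + 2 * k) / 2 = x / 2 + k :=
  Int.add_mul_ediv_left x k two_ne_zero

theorem add_two_mul_sub_one_ediv_two (k x : ℤ) : (x + 2 * k - 1) / 2 = (x - 1) / 2 + k := by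
  rw [add_sub_right_comm, add_two_mul_ediv_two]

namespace G

/-- The factor of `G` in front of the sums. -/
def prefactor (w : ℤ) (u ℓ : ℕ) : F :=
  (-1 : F) ^ w * qq ^ ((u : ℤ) ^ 2 - w * (u : ℤ) + (ℓ : ℤ) * (u : ℤ))

/-- The common shape of the summands of `G`. The even and odd summands differ only in `a`, the part
of the exponent of `q` that is free of `p0`, `p1`, `p2`, and in `m` and `n`, which play the role of
`w / 2` in the `q²`-binomial coefficients. -/
def summand (a m n w : ℤ) (ℓ c e r t : ℕ) (p0 p1 p2 : ℤ) : F :=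
  qq ^ (a + (r : ℤ) * p0 + 2 * (c : ℤ) * p1 + 2 * (e : ℤ) * p2)
    * qbinom qq (ℓ : ℤ) (t : ℤ) * qbinom qq (w + (t : ℤ) + p0) (r : ℤ)
    * qbinom (qq ^ 2) (m + p1) (c : ℤ) * qbinom (qq ^ 2) (n + p2) (e : ℤ)

/-- The sum of the summands over `c + e + r = u` and `t ≤ ℓ` for which the integer `w + t - r`
satisfies `P`; here `a` is a function of `c`, `e`, `t`, whereas `m` and `n` are functions of
`w + t - r`. -/
def paritySum (P : ℤ → Prop) [DecidablePred P] (a : ℕ → ℕ → ℕ → ℤ) (m n : ℤ → ℤ)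
    (w : ℤ) (u ℓ : ℕ) (p0 p1 p2 : ℤ) : F :=
  ∑ c ∈ range (u + 1), ∑ e ∈ range (u + 1 - c), ∑ t ∈ range (ℓ + 1),
    (let r : ℕ := u - c - e
     if P ((t : ℤ) + w - (r : ℤ)) then
       summand (a c e t) (m (w + t - r)) (n (w + t - r)) w ℓ c e r t p0 p1 p2
     else 0)

/-- The sum over even `w + t - r` in the definition of `G`. -/
def evenSum (w : ℤ) (u ℓ : ℕ) : ℤ → ℤ → ℤ → F :=
  paritySum Even (fun c e t ↦ -(t : ℤ) * (ℓ + u - 1) - u * (c + e) + 2 * c)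
    (fun x ↦ x / 2) (fun x ↦ x / 2) w u ℓ

/-- The sum over odd `w + t - r` in the definition of `G`. -/
def oddSum (w : ℤ) (u ℓ : ℕ) : ℤ → ℤ → ℤ → F :=
  paritySum (fun x ↦ ¬ Even x) (fun c e t ↦ -(t : ℤ) * (ℓ + u - 1) - (u - 1) * (c + e))
    (fun x ↦ 1 + (x - 1) / 2) (fun x ↦ (x - 1) / 2) w u ℓ

theorem eq_prefactor_mul_evenSum_sub_oddSum (w : ℤ) (u ℓ : ℕ) (p0 p1 p2 : ℤ) :
    G w u ℓ p0 p1 p2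
      = prefactor w u ℓ * (evenSum w u ℓ p0 p1 p2 - oddSum w u ℓ p0 p1 p2) :=
  rfl

theorem prefactor_shift (w k : ℤ) (u ℓ : ℕ) :
    prefactor w u ℓ = qq ^ (2 * k * (u : ℤ)) * prefactor (w + 2 * k) u ℓ := by
  have sign : (-1 : F) ^ (w + 2 * k) = (-1) ^ w := by
    rw [zpow_add₀ (neg_ne_zero.mpr one_ne_zero), (even_two_mul k).neg_one_zpow, mul_one]
  unfold prefactor
  rw [sign, mul_left_comm, ← zpow_add₀ qq_ne_zero]
  congr 2
  ring

theorem summand_shift (a m n w k : ℤ) (ℓ c e r t : ℕ) (p0 p1 p2 : ℤ) :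
    summand a m n w ℓ c e r t p0 p1 p2
      = qq ^ (2 * k * ((c : ℤ) + e + r))
        * summand a (m + k) (n + k) (w + 2 * k) ℓ c e r t (p0 - 2 * k) (p1 - k) (p2 - k) := by
  have arg₀ : w + 2 * k + t + (p0 - 2 * k) = w + t + p0 := by ring
  unfold summand
  rw [arg₀, add_add_sub_cancel, add_add_sub_cancel]
  simp only [← mul_assoc]
  rw [← zpow_add₀ qq_ne_zero]
  congr 5
  ring

theorem paritySum_shift {P : ℤ → Prop} [DecidablePred P] (a : ℕ → ℕ → ℕ → ℤ) {m n : ℤ → ℤ} {k : ℤ}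
    (hP : ∀ x, P (x + 2 * k) ↔ P x) (hm : ∀ x, m (x + 2 * k) = m x + k)
    (hn : ∀ x, n (x + 2 * k) = n x + k) (w : ℤ) (u ℓ : ℕ) (p0 p1 p2 : ℤ) :
    paritySum P a m n w u ℓ p0 p1 p2
      = qq ^ (2 * k * (u : ℤ))
        * paritySum P a m n (w + 2 * k) u ℓ (p0 - 2 * k) (p1 - k) (p2 - k) := by
  simp only [paritySum, mul_sum]
  refine sum_congr rfl fun c hc ↦ sum_congr rfl fun e he ↦ sum_congr rfl fun t _ ↦ ?_
  rw [mem_range] at hc he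
  have hu : (c : ℤ) + e + ↑(u - c - e) = u := by omega
  generalize u - c - e = r at hu ⊢
  have parity_arg : t + (w + 2 * k) - r = t + w - r + 2 * k := by ring
  have half_arg : w + 2 * k + t - r = w + t - r + 2 * k := by ring
  rw [parity_arg, half_arg, hm, hn, mul_ite, mul_zero, ← hu, ← summand_shift]
  simp only [hP]

theorem evenSum_shift (w k : ℤ) (u ℓ : ℕ) (p0 p1 p2 : ℤ) :
    evenSum w u ℓ p0 p1 p2
      = qq ^ (2 * k * (u : ℤ)) * evenSum (w + 2 * k) u ℓ (p0 - 2 * k) (p1 - k) (p2 - k) :=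
  paritySum_shift _ (even_add_two_mul_iff k) (add_two_mul_ediv_two k) (add_two_mul_ediv_two k) ..

theorem oddSum_shift (w k : ℤ) (u ℓ : ℕ) (p0 p1 p2 : ℤ) :
    oddSum w u ℓ p0 p1 p2
      = qq ^ (2 * k * (u : ℤ)) * oddSum (w + 2 * k) u ℓ (p0 - 2 * k) (p1 - k) (p2 - k) :=
  paritySum_shift _ (fun x ↦ not_congr (even_add_two_mul_iff k x))
    (fun x ↦ by rw [add_two_mul_sub_one_ediv_two, add_assoc])
    (add_two_mul_sub_one_ediv_two k) ..

end G

/-- Shift by `2k`: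
`G(w,u,ℓ;p0,p1,p2) = q^{4ku} G(w+2k,u,ℓ;p0−2k,p1−k,p2−k)`. -/
theorem G_shift (w p0 p1 p2 k : ℤ) (u ℓ : ℕ) :
    G w u ℓ p0 p1 p2
      = qq ^ (4 * k * (u : ℤ)) * G (w + 2 * k) u ℓ (p0 - 2 * k) (p1 - k) (p2 - k) := by
  have exponent : qq ^ (4 * k * (u : ℤ)) = qq ^ (2 * k * (u : ℤ)) * qq ^ (2 * k * (u : ℤ)) := by
    rw [← zpow_add₀ qq_ne_zero]
    ring_nf
  rw [G.eq_prefactor_mul_evenSum_sub_oddSum, G.eq_prefactor_mul_evenSum_sub_oddSum,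
    G.prefactor_shift w k, G.evenSum_shift w k, G.oddSum_shift w k, exponent]
  ring

end
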